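/- Let V be an (n+2)-dimensional vector space with nondegenerate symmetric form g and I ∈ V with g(I,I) = ι ≠ 0. Then the space 𝔠 = {W algebraic Weyl tensor on V : I^A W_{AB[CD} I_{E]} = 0} has dimension n(n+1)²(n+2)/12 − 1, i.e. equals dim(ℜ^{n+1}) − 1 where ℜ^{n+1} is the space of algebraic curvature tensors in dimension n+1. -/

import Mathlib

noncomputable section
open scoped BigOperators

/-- Rank-4 covariant tensors on `ℝ^N`. -/
abbrev T4 (N : ℕ) := Fin N → Fin N → Fin N → Fin N → ℝ

/-- Rank-5 covariant tensors on `ℝ^N`. -/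
abbrev T5 (N : ℕ) := Fin N → Fin N → Fin N → Fin N → Fin N → ℝ

/-- The linear map whose kernel is the space
`𝔠 = {W algebraic Weyl tensor : I^A W_{AB[CD} I_{E]} = 0}`:
component 0,1 are the two antisymmetries, component 2 is the first Bianchi
identity, component 3 is the trace `W_{ABC}{}^B` (padded to five arguments),
and component 4 is `I^A W_{AB[CD} I_{E]}` (indices of `I` lowered with `g`). -/
def weylCondMap {N : ℕ} (g gi : Fin N → Fin N → ℝ) (I : Fin N → ℝ) :
    T4 N →ₗ[ℝ] (Fin 5 → T5 N) where
  toFun W := fun i A B C D E =>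
    if i = 0 then W A B C D + W B A C D
    else if i = 1 then W A B C D + W A B D C
    else if i = 2 then W A B C D + W B C A D + W C A B D
    else if i = 3 then ∑ x, ∑ y, gi x y * W A x C y
    else
      (∑ F, I F * W F B C D) * (∑ G, g E G * I G)
        + (∑ F, I F * W F B D E) * (∑ G, g C G * I G)
        + (∑ F, I F * W F B E C) * (∑ G, g D G * I G)
  map_add' := by
    intro W W'
    funext i A B C D E
    simp only [Pi.add_apply, mul_add, Finset.sum_add_distrib, add_mul]
    split_ifs <;> ring
  map_smul' := by
    intro r W
    funext i A B C D E
    simp only [Pi.smul_apply, smul_eq_mul, RingHom.id_apply]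
    split_ifs with h0 h1 h2 h3
    · ring
    · ring
    · ring
    · rw [Finset.mul_sum]
      refine Finset.sum_congr rfl fun x _ => ?_
      rw [Finset.mul_sum]
      refine Finset.sum_congr rfl fun y _ => by ring
    · have e1 : (∑ F, I F * (r * W F B C D)) = r * ∑ F, I F * W F B C D := by
        rw [Finset.mul_sum]; exact Finset.sum_congr rfl fun F _ => by ring
      have e2 : (∑ F, I F * (r * W F B D E)) = r * ∑ F, I F * W F B D E := by
        rw [Finset.mul_sum]; exact Finset.sum_congr rfl fun F _ => by ring
      have e3 : (∑ F, I F * (r * W F B E C)) = r * ∑ F, I F * W F B E C := by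
        rw [Finset.mul_sum]; exact Finset.sum_congr rfl fun F _ => by ring
      rw [e1, e2, e3]; ring

/-- The Kulkarni-Nomizu type product of `l ⊗ l` with `r`. -/
def KN {N : ℕ} (l : Fin N → ℝ) (r : Fin N → Fin N → ℝ) : T4 N := fun a b c d =>
  l a * l c * r b d - l b * l c * r a d - l a * l d * r b c + l b * l d * r a c

lemma KN_contr {N : ℕ} (l I : Fin N → ℝ) (r : Fin N → Fin N → ℝ) (ι : ℝ)
    (hl : ∑ F, I F * l F = ι) (hr : ∀ d, ∑ F, I F * r F d = 0) (b c d : Fin N) :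
    ∑ F, I F * KN l r F b c d = ι * (l c * r b d - l d * r b c) := by
  have h : ∑ F, I F * KN l r F b c d = (∑ F, I F * l F) * (l c * r b d - l d * r b c)
      - (∑ F, I F * r F d) * (l b * l c) + (∑ F, I F * r F c) * (l b * l d) := by
    simp only [KN, Finset.sum_mul, ← Finset.sum_add_distrib,
      ← Finset.sum_sub_distrib]
    exact Finset.sum_congr rfl fun F _ => by ring
  rw [h, hl, hr, hr]; ring

lemma KN_trace {N : ℕ} (gi : Fin N → Fin N → ℝ) (l I : Fin N → ℝ) (r : Fin N → Fin N → ℝ) (ι : ℝ)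
    (hl : ∑ F, I F * l F = ι) (hr : ∀ d, ∑ F, I F * r F d = 0) (hr' : ∀ d, ∑ F, I F * r d F = 0)
    (h1 : ∀ x, ∑ y, gi x y * l y = I x) (h2 : ∀ y, ∑ x, gi x y * l x = I y) (a c : Fin N) :
    ∑ x, ∑ y, gi x y * KN l r a x c y = l a * l c * (∑ x, ∑ y, gi x y * r x y) + ι * r a c := by
  have h : ∑ x, ∑ y, gi x y * KN l r a x c y = l a * l c * (∑ x, ∑ y, gi x y * r x y)
      - (∑ x, ∑ y, (gi x y * l x) * r a y) * l c - (∑ x, (∑ y, gi x y * l y) * r x c) * l a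
      + (∑ x, (∑ y, gi x y * l y) * l x) * r a c := by
    simp only [KN, Finset.mul_sum, Finset.sum_mul, ← Finset.sum_add_distrib,
      ← Finset.sum_sub_distrib]
    exact Finset.sum_congr rfl fun F _ => Finset.sum_congr rfl fun G _ => by ring
  rw [h, Finset.sum_comm (f := fun x y => (gi x y * l x) * r a y)]
  simp only [← Finset.sum_mul, h1, h2, hl, hr, hr']
  ring

/-- Curvature tensors annihilated by `I`. -/
def KK {N : ℕ} (I : Fin N → ℝ) : Submodule ℝ (T4 N) where
  carrier := {R | (∀ a b c d, R a b c d + R b a c d = 0) ∧ (∀ a b c d, R a b c d + R a b d c = 0) ∧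
    (∀ a b c d, R a b c d + R b c a d + R c a b d = 0) ∧ ∀ b c d, ∑ F, I F * R F b c d = 0}
  zero_mem' := by simp
  add_mem' := by
    rintro R S ⟨h1, h2, h3, h4⟩ ⟨k1, k2, k3, k4⟩
    refine ⟨fun a b c d => ?_, fun a b c d => ?_, fun a b c d => ?_, fun b c d => ?_⟩ <;>
      simp only [Pi.add_apply]
    · linarith [h1 a b c d, k1 a b c d]
    · linarith [h2 a b c d, k2 a b c d]
    · linarith [h3 a b c d, k3 a b c d]
    · simp only [mul_add, Finset.sum_add_distrib, h4, k4, add_zero]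
  smul_mem' := by
    rintro t R ⟨h1, h2, h3, h4⟩
    refine ⟨fun a b c d => ?_, fun a b c d => ?_, fun a b c d => ?_, fun b c d => ?_⟩ <;>
      simp only [Pi.smul_apply, smul_eq_mul]
    · linear_combination t * h1 a b c d
    · linear_combination t * h2 a b c d
    · linear_combination t * h3 a b c d
    · have := h4 b c d
      simp only [mul_left_comm _ t, ← Finset.mul_sum, this, mul_zero]

lemma pair_symm {N : ℕ} {R : T4 N} (h1 : ∀ a b c d, R a b c d + R b a c d = 0)
    (h2 : ∀ a b c d, R a b c d + R a b d c = 0)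
    (h3 : ∀ a b c d, R a b c d + R b c a d + R c a b d = 0) (a b c d : Fin N) :
    R a b c d = R c d a b := by
  linarith [h3 a b c d, h3 b c d a, h3 c d a b, h3 d a b c, h1 a b c d, h1 b c a d, h1 c a b d,
    h1 b c d a, h1 c d b a, h1 d b c a, h1 c d a b, h1 d a c b, h1 a c d b, h1 d a b c, h1 a b d c,
    h1 b d a c, h2 a b c d, h2 b c a d, h2 c a b d, h2 b c d a, h2 c d b a, h2 d b c a, h2 c d a b,
    h2 d a c b, h2 a c d b, h2 d a b c, h2 a b d c, h2 b d a c, h2 b a c d, h2 c b a d, h2 a c b d,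
    h2 d c a b, h2 b d c a, h2 a d b c]

/-- The scalar curvature functional. -/
def scal {N : ℕ} (gi : Fin N → Fin N → ℝ) : T4 N →ₗ[ℝ] ℝ where
  toFun R := ∑ a, ∑ c, gi a c * ∑ x, ∑ y, gi x y * R a x c y
  map_add' R S := by simp only [Pi.add_apply, mul_add, Finset.sum_add_distrib]
  map_smul' t R := by
    simp only [Pi.smul_apply, smul_eq_mul, mul_left_comm _ t, ← Finset.mul_sum, RingHom.id_apply]

/-- Young operator. -/
def YS {N : ℕ} (T : T4 N) : T4 N := fun a b c d =>
  (T a b c d - T b a c d - T a b d c + T b a d c + T c d a b - T d c a b - T c d b a + T d c b a) / 8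

def YY {N : ℕ} (T : T4 N) : T4 N := fun a b c d =>
  YS T a b c d - (YS T a b c d + YS T b c a d + YS T c a b d) / 3

def HH {N : ℕ} (h : Fin N → Fin N → ℝ) (W : T4 N) : T4 N := fun a b c d =>
  ∑ A, ∑ B, ∑ C, ∑ D, h a A * h b B * h c C * h d D * W A B C D

def PP {N : ℕ} (h : Fin N → Fin N → ℝ) : T4 N →ₗ[ℝ] T4 N where
  toFun W := YY (HH h W)
  map_add' R S := by
    have : HH h (R + S) = HH h R + HH h S := by
      funext a b c d
      simp only [HH, Pi.add_apply, mul_add, Finset.sum_add_distrib]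
    rw [this]; funext a b c d
    simp only [YY, YS, Pi.add_apply]; ring
  map_smul' t R := by
    have : HH h (t • R) = t • HH h R := by
      funext a b c d
      simp only [HH, Pi.smul_apply, smul_eq_mul, mul_left_comm _ t, ← Finset.mul_sum]
    rw [this]; funext a b c d
    simp only [YY, YS, Pi.smul_apply, smul_eq_mul, RingHom.id_apply]; ring

lemma YY_fix {N : ℕ} {R : T4 N} (h1 : ∀ a b c d, R a b c d + R b a c d = 0)
    (h2 : ∀ a b c d, R a b c d + R a b d c = 0)
    (h3 : ∀ a b c d, R a b c d + R b c a d + R c a b d = 0) : YY R = R := by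
  have hS : YS R = R := by
    funext a b c d
    simp only [YS]
    linarith [pair_symm h1 h2 h3 a b c d, h1 a b c d, h2 a b c d, h2 b a c d, h1 c d a b,
      h2 c d a b, h2 d c a b]
  funext a b c d
  simp only [YY, hS, h3]; ring

lemma trace_T4 {N : ℕ} (f : T4 N →ₗ[ℝ] T4 N) :
    LinearMap.trace ℝ (T4 N) f = ∑ a, ∑ b, ∑ c, ∑ d,
      f (Pi.single a (Pi.single b (Pi.single c (Pi.single d 1)))) a b c d := by
  let pr : Fin N → Fin N → Fin N → Fin N → (T4 N →ₗ[ℝ] ℝ) := fun a b c d =>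
    LinearMap.proj d ∘ₗ LinearMap.proj c ∘ₗ LinearMap.proj b ∘ₗ LinearMap.proj a
  have hf : f = ∑ a, ∑ b, ∑ c, ∑ d, (pr a b c d).smulRight
      (f (Pi.single a (Pi.single b (Pi.single c (Pi.single d 1))))) := by
    refine LinearMap.ext fun W => ?_
    have hW : W = ∑ a, ∑ b, ∑ c, ∑ d, W a b c d •
      (Pi.single a (Pi.single b (Pi.single c (Pi.single d 1))) : T4 N) := by
      funext a b c d
      simp [Finset.sum_apply, Pi.single_apply, ite_apply]
    conv_lhs => rw [hW]
    simp [map_sum, pr, LinearMap.sum_apply]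
  conv_lhs => rw [hf]
  simp [map_sum, pr]

lemma HH_single {N : ℕ} (h : Fin N → Fin N → ℝ) (A B C D a b c d : Fin N) :
    HH h (Pi.single A (Pi.single B (Pi.single C (Pi.single D 1)))) a b c d
      = h a A * h b B * h c C * h d D := by
  simp [HH, Pi.single_apply, ite_apply]

lemma trace_PP {N : ℕ} (h : Fin N → Fin N → ℝ) (m : ℝ)
    (hh : ∀ x y, ∑ d, h x d * h d y = h x y) (hm : ∑ d, h d d = m) :
    LinearMap.trace ℝ (T4 N) (PP h) = m ^ 2 * (m ^ 2 - 1) / 12 := by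
  have L0 : ∀ u : ℝ, ∑ d, u * h d d = u * m := fun u => by rw [← Finset.mul_sum, hm]
  have L1 : ∀ (x y : ℝ) (a s : Fin N), ∑ d, h d a * x * y * h s d = h s a * x * y := by
    intro x y a s
    rw [← hh s a]; simp only [Finset.sum_mul]; exact Finset.sum_congr rfl fun d _ => by ring
  have L2 : ∀ (x y : ℝ) (b s : Fin N), ∑ d, x * h d b * y * h s d = x * h s b * y := by
    intro x y a s
    rw [← hh s a]; simp only [Finset.sum_mul, Finset.mul_sum]
    exact Finset.sum_congr rfl fun d _ => by ring
  have L3 : ∀ (x : ℝ) (b s : Fin N), ∑ d, x * h d b * h s d = x * h s b := by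
    intro x a s
    rw [← hh s a]; simp only [Finset.mul_sum]
    exact Finset.sum_congr rfl fun d _ => by ring
  have M1 : ∀ (x : ℝ) (a s : Fin N), ∑ d, h d a * x * h s d = h s a * x := by
    intro x a s
    rw [← hh s a]; simp only [Finset.sum_mul]; exact Finset.sum_congr rfl fun d _ => by ring
  have M2 : ∀ (a s : Fin N), ∑ d, h d a * h s d = h s a := by
    intro a s
    rw [← hh s a]; exact Finset.sum_congr rfl fun d _ => by ring
  rw [trace_T4]
  simp only [PP, LinearMap.coe_mk, AddHom.coe_mk, YY, YS, HH_single, Finset.sum_add_distrib,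
    Finset.sum_sub_distrib, ← Finset.sum_div, L0, L1, L2, L3, M1, M2, hm, ← Finset.sum_mul]
  ring

lemma YY_contr {N : ℕ} (I : Fin N → ℝ) (T : T4 N)
    (s1 : ∀ b c d, ∑ F, I F * T F b c d = 0) (s2 : ∀ b c d, ∑ F, I F * T b F c d = 0)
    (s3 : ∀ b c d, ∑ F, I F * T b c F d = 0) (s4 : ∀ b c d, ∑ F, I F * T b c d F = 0)
    (b c d : Fin N) : ∑ F, I F * YY T F b c d = 0 := by
  simp only [YY, YS, mul_sub, mul_add, ← mul_div_assoc, Finset.sum_add_distrib,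
    Finset.sum_sub_distrib, ← Finset.sum_div, s1, s2, s3, s4]
  simp

lemma HH_zero {N : ℕ} (I : Fin N → ℝ) (h : Fin N → Fin N → ℝ) (hI : ∀ A, ∑ F, I F * h F A = 0)
    (X : Fin N → ℝ) : ∑ F, I F * ∑ A, h F A * X A = 0 := by
  simp only [Finset.mul_sum]
  rw [Finset.sum_comm]
  simp only [← mul_assoc, ← Finset.sum_mul, hI, zero_mul, Finset.sum_const_zero]

lemma HH_s1 {N : ℕ} (h : Fin N → Fin N → ℝ) (W : T4 N) (a b c d : Fin N) :
    HH h W a b c d = ∑ A, h a A * ∑ B, h b B * ∑ C, h c C * ∑ D, h d D * W A B C D := by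
  simp only [HH, Finset.mul_sum, mul_assoc]

lemma HH_s2 {N : ℕ} (h : Fin N → Fin N → ℝ) (W : T4 N) (a b c d : Fin N) :
    HH h W a b c d = ∑ B, h b B * ∑ A, h a A * ∑ C, h c C * ∑ D, h d D * W A B C D := by
  simp only [HH_s1, Finset.mul_sum]
  rw [Finset.sum_comm]
  simp only [mul_left_comm]

lemma HH_s3 {N : ℕ} (h : Fin N → Fin N → ℝ) (W : T4 N) (a b c d : Fin N) :
    HH h W a b c d = ∑ C, h c C * ∑ A, h a A * ∑ B, h b B * ∑ D, h d D * W A B C D := by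
  have : HH h W a b c d = HH h (fun x y z w => W y z x w) c a b d := by
    simp only [HH]
    refine (Finset.sum_congr rfl fun A _ => Finset.sum_comm).trans ?_
    rw [Finset.sum_comm]
    refine Finset.sum_congr rfl fun _ _ => Finset.sum_congr rfl fun _ _ =>
      Finset.sum_congr rfl fun _ _ => Finset.sum_congr rfl fun _ _ => by ring
  rw [this, HH_s1]

lemma HH_s4 {N : ℕ} (h : Fin N → Fin N → ℝ) (W : T4 N) (a b c d : Fin N) :
    HH h W a b c d = ∑ D, h d D * ∑ A, h a A * ∑ B, h b B * ∑ C, h c C * W A B C D := by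
  have : HH h W a b c d = HH h (fun x y z w => W x y w z) a b d c := by
    simp only [HH]
    refine Finset.sum_congr rfl fun _ _ => Finset.sum_congr rfl fun _ _ => ?_
    rw [Finset.sum_comm]
    refine
      Finset.sum_congr rfl fun _ _ => Finset.sum_congr rfl fun _ _ => by ring
  rw [this, HH_s3]

lemma PP_isProj {N : ℕ} (I l : Fin N → ℝ) (ι : ℝ) (hι0 : ι ≠ 0) (hl : ∑ F, I F * l F = ι) :
    LinearMap.IsProj (KK I)
      (PP (fun a b => (if a = b then (1 : ℝ) else 0) - l a * I b / ι)) := by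
  set h : Fin N → Fin N → ℝ := fun a b => (if a = b then (1 : ℝ) else 0) - l a * I b / ι with hdef
  have hI : ∀ A, ∑ F, I F * h F A = 0 := by
    intro A
    have : ∑ F, I F * h F A = I A - (∑ F, I F * l F) * I A / ι := by
      simp only [hdef, mul_sub, Finset.sum_sub_distrib, Finset.sum_mul, Finset.sum_div]
      congr 1
      · simp
      · exact Finset.sum_congr rfl fun F _ => by ring
    rw [this, hl]; field_simp; ring
  have hX : ∀ X : Fin N → ℝ, ∑ F, I F * X F = 0 → ∀ a, ∑ A, h a A * X A = X a := by
    intro X hX a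
    have : ∑ A, h a A * X A = X a - l a / ι * ∑ F, I F * X F := by
      simp only [hdef, sub_mul, Finset.sum_sub_distrib, Finset.mul_sum]
      congr 1
      · simp
      · exact Finset.sum_congr rfl fun F _ => by ring
    rw [this, hX]; ring
  constructor
  · intro W
    refine ⟨fun a b c d => ?_, fun a b c d => ?_, fun a b c d => ?_, ?_⟩
    · simp only [PP, LinearMap.coe_mk, AddHom.coe_mk, YY, YS]; ring
    · simp only [PP, LinearMap.coe_mk, AddHom.coe_mk, YY, YS]; ring
    · simp only [PP, LinearMap.coe_mk, AddHom.coe_mk, YY, YS]; ring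
    · apply YY_contr <;> intro b c d
      · simp only [HH_s1 h W]; exact HH_zero I h hI _
      · simp only [HH_s2 h W]; exact HH_zero I h hI _
      · simp only [HH_s3 h W]; exact HH_zero I h hI _
      · simp only [HH_s4 h W]; exact HH_zero I h hI _
  · rintro R ⟨h1, h2, h3, h4⟩
    have hps := pair_symm h1 h2 h3
    have s2 : ∀ b c d, ∑ F, I F * R b F c d = 0 := by
      intro b c d
      have := h4 b c d
      rw [← neg_eq_zero, ← Finset.sum_neg_distrib, ← this]
      exact Finset.sum_congr rfl fun F _ => by linear_combination (-I F) * h1 F b c d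
    have s3 : ∀ b c d, ∑ F, I F * R b c F d = 0 := by
      intro b c d
      rw [← h4 d b c]
      exact Finset.sum_congr rfl fun F _ => by rw [hps]
    have s4 : ∀ b c d, ∑ F, I F * R b c d F = 0 := by
      intro b c d
      rw [← s2 d b c]
      exact Finset.sum_congr rfl fun F _ => by rw [hps]
    have : HH h R = R := by
      funext a b c d
      rw [HH_s1]
      have e4 : ∀ A B C, ∑ D, h d D * R A B C D = R A B C d := fun A B C => hX _ (s4 A B C) d
      have e3 : ∀ A B, ∑ C, h c C * R A B C d = R A B c d := fun A B => hX _ (s3 A B d) c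
      have e2 : ∀ A, ∑ B, h b B * R A B c d = R A b c d := fun A => hX _ (s2 A c d) b
      simp only [e4, e3, e2]
      exact hX (fun A => R A b c d) (h4 b c d) a
    change YY (HH h R) = R
    rw [this]
    exact YY_fix h1 h2 h3

lemma finrank_KK {N : ℕ} (I l : Fin N → ℝ) (ι : ℝ) (hι0 : ι ≠ 0) (hl : ∑ F, I F * l F = ι) :
    (Module.finrank ℝ (KK I) : ℝ) = ((N : ℝ) - 1) ^ 2 * (((N : ℝ) - 1) ^ 2 - 1) / 12 := by
  rw [← (PP_isProj I l ι hι0 hl).trace]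
  apply trace_PP
  · intro x y
    have : ∑ d, ((if x = d then (1 : ℝ) else 0) - l x * I d / ι)
        * ((if d = y then (1 : ℝ) else 0) - l d * I y / ι)
        = (if x = y then (1 : ℝ) else 0) - 2 * (l x * I y / ι)
          + l x * I y / ι ^ 2 * ∑ d, I d * l d := by
      simp only [sub_mul, mul_sub, Finset.sum_sub_distrib, Finset.mul_sum]
      simp
      rw [← sub_eq_zero]
      have : ∑ d, l x * I d / ι * (l d * I y / ι) = ∑ d, l x * I y / ι ^ 2 * (I d * l d) :=
        Finset.sum_congr rfl fun F _ => by ring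
      rw [this]; ring
    rw [this, hl]; field_simp; ring
  · simp only [Finset.sum_sub_distrib, ← Finset.sum_div, mul_comm (l _), hl]
    simp [hι0]

/-- The Ricci contraction. -/
def ricc {N : ℕ} (gi : Fin N → Fin N → ℝ) (R : T4 N) (a c : Fin N) : ℝ :=
  ∑ x, ∑ y, gi x y * R a x c y

/-- From `I`-free scalar-flat curvature tensors to compatible Weyl tensors. -/
def Phi {N : ℕ} (gi : Fin N → Fin N → ℝ) (l : Fin N → ℝ) (ι : ℝ) : T4 N →ₗ[ℝ] T4 N where
  toFun R := fun a b c d => R a b c d - KN l (ricc gi R) a b c d / ι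
  map_add' R S := by
    have : ∀ a c, ricc gi (R + S) a c = ricc gi R a c + ricc gi S a c := by
      intro a c; simp only [ricc, Pi.add_apply, mul_add, Finset.sum_add_distrib]
    funext a b c d
    simp only [KN, this, Pi.add_apply]; ring
  map_smul' t R := by
    have : ∀ a c, ricc gi (t • R) a c = t * ricc gi R a c := by
      intro a c; simp only [ricc, Pi.smul_apply, smul_eq_mul, mul_left_comm _ t, ← Finset.mul_sum]
    funext a b c d
    simp only [KN, this, Pi.smul_apply, smul_eq_mul, RingHom.id_apply]; ring

lemma mem_ker_weyl {N : ℕ} (g gi : Fin N → Fin N → ℝ) (I l : Fin N → ℝ)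
    (hl : ∀ a, ∑ b, g a b * I b = l a) (W : T4 N) :
    W ∈ LinearMap.ker (weylCondMap g gi I) ↔
      (∀ a b c d, W a b c d + W b a c d = 0) ∧ (∀ a b c d, W a b c d + W a b d c = 0) ∧
      (∀ a b c d, W a b c d + W b c a d + W c a b d = 0) ∧
      (∀ a c, ∑ x, ∑ y, gi x y * W a x c y = 0) ∧
      (∀ b c d e, (∑ F, I F * W F b c d) * l e + (∑ F, I F * W F b d e) * l c
        + (∑ F, I F * W F b e c) * l d = 0) := by
  rw [LinearMap.mem_ker]
  constructor
  · intro h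
    have h' : ∀ i a b c d e, weylCondMap g gi I W i a b c d e = 0 := by
      intro i a b c d e; rw [h]; rfl
    refine ⟨fun a b c d => ?_, fun a b c d => ?_, fun a b c d => ?_, fun a c => ?_,
      fun b c d e => ?_⟩
    · simpa [weylCondMap] using h' 0 a b c d a
    · simpa [weylCondMap] using h' 1 a b c d a
    · simpa [weylCondMap] using h' 2 a b c d a
    · simpa [weylCondMap] using h' 3 a a c a a
    · simpa [weylCondMap, hl] using h' 4 b b c d e
  · rintro ⟨h1, h2, h3, h4, h5⟩
    funext i a b c d e
    simp only [weylCondMap, LinearMap.coe_mk, AddHom.coe_mk, hl, h1, h2, h3, h4, h5]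
    simp

lemma KK_slots {N : ℕ} {I : Fin N → ℝ} {R : T4 N} (hR : R ∈ KK I) :
    (∀ b c d, ∑ F, I F * R b F c d = 0) ∧ (∀ b c d, ∑ F, I F * R b c F d = 0) ∧
    (∀ b c d, ∑ F, I F * R b c d F = 0) := by
  obtain ⟨h1, h2, h3, h4⟩ := hR
  have hps := pair_symm h1 h2 h3
  have s2 : ∀ b c d, ∑ F, I F * R b F c d = 0 := by
    intro b c d
    have := h4 b c d
    rw [← neg_eq_zero, ← Finset.sum_neg_distrib, ← this]
    exact Finset.sum_congr rfl fun F _ => by linear_combination (-I F) * h1 F b c d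
  refine ⟨s2, ?_, ?_⟩
  · intro b c d
    rw [← h4 d b c]
    exact Finset.sum_congr rfl fun F _ => by rw [hps]
  · intro b c d
    rw [← s2 d b c]
    exact Finset.sum_congr rfl fun F _ => by rw [hps]

lemma ricc_symm {N : ℕ} {gi : Fin N → Fin N → ℝ} (hgi : ∀ a b, gi a b = gi b a) {R : T4 N}
    (hps : ∀ a b c d, R a b c d = R c d a b) (a c : Fin N) : ricc gi R a c = ricc gi R c a := by
  unfold ricc
  rw [Finset.sum_comm]
  exact Finset.sum_congr rfl fun x _ => Finset.sum_congr rfl fun y _ => by rw [hgi, hps]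

lemma ricc_contr {N : ℕ} {gi : Fin N → Fin N → ℝ} {I : Fin N → ℝ} {R : T4 N}
    (h4 : ∀ b c d, ∑ F, I F * R F b c d = 0) (c : Fin N) : ∑ F, I F * ricc gi R F c = 0 := by
  unfold ricc
  simp only [Finset.mul_sum]
  rw [Finset.sum_comm]
  refine Finset.sum_eq_zero fun x _ => ?_
  rw [Finset.sum_comm]
  refine Finset.sum_eq_zero fun y _ => ?_
  simp only [mul_left_comm (I _), ← Finset.mul_sum, h4, mul_zero]

section
variable {N : ℕ} {gi : Fin N → Fin N → ℝ} {I l : Fin N → ℝ} {ι : ℝ}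

lemma KN_sym1 (r : Fin N → Fin N → ℝ) (a b c d) : KN l r a b c d + KN l r b a c d = 0 := by
  simp only [KN]; ring
lemma KN_sym2 (r : Fin N → Fin N → ℝ) (a b c d) : KN l r a b c d + KN l r a b d c = 0 := by
  simp only [KN]; ring
lemma KN_sym3 (r : Fin N → Fin N → ℝ) (hr : ∀ a b, r a b = r b a) (a b c d) :
    KN l r a b c d + KN l r b c a d + KN l r c a b d = 0 := by
  simp only [KN, hr c a, hr c b, hr b a]; ring

lemma Phi_contr (hι0 : ι ≠ 0) (hl : ∑ F, I F * l F = ι) {R : T4 N} (hR : R ∈ KK I)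
    (b c d : Fin N) : ∑ F, I F * Phi gi l ι R F b c d =
      - (l c * ricc gi R b d - l d * ricc gi R b c) := by
  obtain ⟨h1, h2, h3, h4⟩ := hR
  have := KN_contr l I (ricc gi R) ι hl (ricc_contr h4) b c d
  simp only [Phi, LinearMap.coe_mk, AddHom.coe_mk, mul_sub, Finset.sum_sub_distrib, h4,
    ← mul_div_assoc, ← Finset.sum_div, this]
  field_simp; ring

lemma Phi_mem (g : Fin N → Fin N → ℝ) (hgl : ∀ a, ∑ b, g a b * I b = l a) (hι0 : ι ≠ 0)
    (hgi : ∀ a b, gi a b = gi b a)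
    (hl : ∑ F, I F * l F = ι) (hg1 : ∀ x, ∑ y, gi x y * l y = I x) {R : T4 N} (hR : R ∈ KK I)
    (hs : scal gi R = 0) : Phi gi l ι R ∈ LinearMap.ker (weylCondMap g gi I) := by
  have hc := Phi_contr (gi := gi) hι0 hl hR
  obtain ⟨h1, h2, h3, h4⟩ := hR
  have hsym := ricc_symm hgi (pair_symm h1 h2 h3)
  rw [mem_ker_weyl g gi I l hgl]
  refine ⟨fun a b c d => ?_, fun a b c d => ?_, fun a b c d => ?_, fun a c => ?_,
      fun b c d e => ?_⟩
  · simp only [Phi, LinearMap.coe_mk, AddHom.coe_mk]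
    linear_combination h1 a b c d - KN_sym1 (l := l) (ricc gi R) a b c d / ι
  · simp only [Phi, LinearMap.coe_mk, AddHom.coe_mk]
    linear_combination h2 a b c d - KN_sym2 (l := l) (ricc gi R) a b c d / ι
  · simp only [Phi, LinearMap.coe_mk, AddHom.coe_mk]
    linear_combination h3 a b c d - KN_sym3 (l := l) (ricc gi R) hsym a b c d / ι
  · have ht := KN_trace gi l I (ricc gi R) ι hl (ricc_contr h4)
      (fun d => by simp only [hsym d]; exact ricc_contr h4 d) hg1
      (fun y => by simp only [hgi _ y]; exact hg1 y) a c
    have hs' : ∑ x, ∑ y, gi x y * ricc gi R x y = 0 := hs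
    rw [hs'] at ht
    simp only [Phi, LinearMap.coe_mk, AddHom.coe_mk, mul_sub, Finset.sum_sub_distrib,
      ← mul_div_assoc, ← Finset.sum_div, ht]
    change ricc gi R a c - _ = 0
    field_simp; ring
  · simp only [hc]; ring

lemma Phi_inj (hι0 : ι ≠ 0) (hl : ∑ F, I F * l F = ι) {R : T4 N} (hR : R ∈ KK I)
    (h0 : Phi gi l ι R = 0) : R = 0 := by
  have hc := Phi_contr (gi := gi) hι0 hl hR
  have hs := KK_slots hR
  have hr : ∀ b, ∑ F, I F * ricc gi R b F = 0 := by
    intro b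
    simp only [ricc, Finset.mul_sum]
    rw [Finset.sum_comm]
    refine Finset.sum_eq_zero fun x _ => ?_
    rw [Finset.sum_comm]
    refine Finset.sum_eq_zero fun y _ => ?_
    simp only [mul_left_comm (I _), ← Finset.mul_sum, hs.2.1, mul_zero]
  have hz : ∀ b d, ricc gi R b d = 0 := by
    intro b d
    have e : ∀ c, l c * ricc gi R b d - l d * ricc gi R b c = 0 := by
      intro c
      have := hc b c d
      rw [h0] at this
      simp at this
      linarith
    have e2 : ∑ c, I c * (l c * ricc gi R b d - l d * ricc gi R b c) = 0 := by simp [e]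
    have e3 : ∑ c, I c * (l c * ricc gi R b d - l d * ricc gi R b c)
        = (∑ c, I c * l c) * ricc gi R b d - l d * ∑ c, I c * ricc gi R b c := by
      simp only [Finset.mul_sum, Finset.sum_mul, ← Finset.sum_sub_distrib]
      exact Finset.sum_congr rfl fun F _ => by ring
    rw [e3, hr, hl] at e2
    simpa [hι0] using e2
  funext a b c d
  have := congrFun (congrFun (congrFun (congrFun h0 a) b) c) d
  simpa [Phi, KN, hz] using this

/-- The double contraction with `I`. -/
def dbl (I : Fin N → ℝ) (W : T4 N) (b d : Fin N) : ℝ := ∑ C, I C * ∑ F, I F * W F b C d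

lemma Phi_surj (g : Fin N → Fin N → ℝ) (hgl : ∀ a, ∑ b, g a b * I b = l a) (hι0 : ι ≠ 0)
    (hgi : ∀ a b, gi a b = gi b a)
    (hl : ∑ F, I F * l F = ι) (hg1 : ∀ x, ∑ y, gi x y * l y = I x) {W : T4 N}
    (hW : W ∈ LinearMap.ker (weylCondMap g gi I)) :
    ∃ R, R ∈ KK I ∧ scal gi R = 0 ∧ Phi gi l ι R = W := by
  rw [mem_ker_weyl g gi I l hgl] at hW
  obtain ⟨h1, h2, h3, h4, h5⟩ := hW
  have hps := pair_symm h1 h2 h3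
  have Ssym : ∀ b d, dbl I W b d = dbl I W d b := by
    intro b d
    simp only [dbl, Finset.mul_sum]
    rw [Finset.sum_comm]
    exact Finset.sum_congr rfl fun x _ => Finset.sum_congr rfl fun y _ => by
      rw [hps]; ring
  have Sneg : ∀ b d, ∑ C, I C * ∑ F, I F * W F b d C = - dbl I W b d := by
    intro b d
    rw [dbl, ← Finset.sum_neg_distrib]
    simp only [Finset.mul_sum, ← Finset.sum_neg_distrib]
    exact Finset.sum_congr rfl fun x _ => Finset.sum_congr rfl fun y _ => by
      linear_combination I x * I y * h2 y b d x
  have SI : ∀ d, ∑ F, I F * dbl I W F d = 0 := by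
    intro d
    have : ∀ C, ∑ B, ∑ F, I B * (I F * W F B C d) = 0 := by
      intro C
      have e : ∑ B, ∑ F, I B * (I F * W F B C d) = - ∑ B, ∑ F, I B * (I F * W F B C d) := by
        conv_lhs => rw [Finset.sum_comm]
        simp only [← Finset.sum_neg_distrib]
        exact Finset.sum_congr rfl fun x _ => Finset.sum_congr rfl fun y _ => by
          linear_combination I x * I y * h1 x y C d
      linarith
    have e : ∑ F, I F * dbl I W F d = ∑ C, I C * ∑ B, ∑ F, I B * (I F * W F B C d) := by
      simp only [dbl, Finset.mul_sum]
      rw [Finset.sum_comm]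
      exact Finset.sum_congr rfl fun x _ => Finset.sum_congr rfl fun y _ =>
        Finset.sum_congr rfl fun z _ => by ring
    rw [e]; simp [this]
  have SI' : ∀ d, ∑ F, I F * dbl I W d F = 0 := fun d => by simp only [Ssym d]; exact SI d
  have Str : ∑ x, ∑ y, gi x y * dbl I W x y = 0 := by
    have e : ∑ x, ∑ y, gi x y * dbl I W x y
        = ∑ C, ∑ F, I C * I F * ∑ x, ∑ y, gi x y * W F x C y := by
      simp only [dbl, Finset.mul_sum]
      refine (Finset.sum_congr rfl fun x _ => Finset.sum_comm).trans ?_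
      rw [Finset.sum_comm]
      refine Finset.sum_congr rfl fun C _ => ?_
      refine (Finset.sum_congr rfl fun x _ => Finset.sum_comm).trans ?_
      rw [Finset.sum_comm]
      exact Finset.sum_congr rfl fun F _ => Finset.sum_congr rfl fun x _ =>
        Finset.sum_congr rfl fun y _ => by ring
    rw [e]; simp [h4]
  have WI : ∀ b c d, ∑ F, I F * W F b c d = (l c * dbl I W b d - l d * dbl I W b c) / ι := by
    intro b c d
    have e : ∑ E, I E * ((∑ F, I F * W F b c d) * l E + (∑ F, I F * W F b d E) * l c
        + (∑ F, I F * W F b E c) * l d) = 0 := by simp [h5]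
    have e2 : ∑ E, I E * ((∑ F, I F * W F b c d) * l E + (∑ F, I F * W F b d E) * l c
        + (∑ F, I F * W F b E c) * l d) = (∑ E, I E * l E) * (∑ F, I F * W F b c d)
        + (∑ E, I E * ∑ F, I F * W F b d E) * l c + dbl I W b c * l d := by
      rw [dbl]
      generalize (∑ F, I F * W F b c d) = q
      simp only [mul_add, Finset.sum_add_distrib]
      congr 1
      · congr 1
        · rw [Finset.sum_mul]; exact Finset.sum_congr rfl fun F _ => by ring
        · rw [Finset.sum_mul]; exact Finset.sum_congr rfl fun F _ => by ring
      · rw [Finset.sum_mul]; exact Finset.sum_congr rfl fun F _ => by ring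
    rw [e2, Sneg, hl] at e
    field_simp
    linarith
  let R : T4 N := fun a b c d => W a b c d - KN l (dbl I W) a b c d / ι ^ 2
  have hric : ∀ a c, ricc gi R a c = - dbl I W a c / ι := by
    intro a c
    have ht := KN_trace gi l I (dbl I W) ι hl SI SI' hg1
      (fun y => by simp only [hgi _ y]; exact hg1 y) a c
    simp only [ricc, R, mul_sub, Finset.sum_sub_distrib, ← mul_div_assoc, ← Finset.sum_div, ht,
      h4, Str]
    field_simp; ring
  refine ⟨R, ⟨fun a b c d => ?_, fun a b c d => ?_, fun a b c d => ?_, fun b c d => ?_⟩, ?_, ?_⟩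
  · linear_combination h1 a b c d - KN_sym1 (l := l) (dbl I W) a b c d / ι ^ 2
  · linear_combination h2 a b c d - KN_sym2 (l := l) (dbl I W) a b c d / ι ^ 2
  · linear_combination h3 a b c d - KN_sym3 (l := l) (dbl I W) Ssym a b c d / ι ^ 2
  · have hk := KN_contr l I (dbl I W) ι hl SI b c d
    simp only [R, mul_sub, Finset.sum_sub_distrib, ← mul_div_assoc, ← Finset.sum_div, hk, WI]
    field_simp; ring
  · change ∑ x, ∑ y, gi x y * ricc gi R x y = 0
    simp only [hric, ← mul_div_assoc, ← Finset.sum_div, mul_neg, Finset.sum_neg_distrib, Str]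
    simp
  · funext a b c d
    simp only [Phi, LinearMap.coe_mk, AddHom.coe_mk, KN, hric]
    simp only [R, KN]
    field_simp; ring

lemma scal_witness (g : Fin N → Fin N → ℝ) (hgs : ∀ a b, g a b = g b a)
    (hginv : ∀ a b, (∑ c, gi a c * g c b) = if a = b then (1 : ℝ) else 0)
    (hgl : ∀ a, ∑ b, g a b * I b = l a) (hι0 : ι ≠ 0)
    (hl : ∑ F, I F * l F = ι) (hg1 : ∀ x, ∑ y, gi x y * l y = I x) :
    ∃ R ∈ KK I, scal gi R = ((N : ℝ) - 1) * ((N : ℝ) - 2) := by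
  let p : Fin N → Fin N → ℝ := fun a b => g a b - l a * l b / ι
  have ps : ∀ a b, p a b = p b a := fun a b => by simp only [p, hgs a b]; ring
  have pI : ∀ c, ∑ F, I F * p F c = 0 := by
    intro c
    have : ∑ F, I F * p F c = (∑ F, g c F * I F) - (∑ F, I F * l F) * (l c / ι) := by
      simp only [Finset.sum_mul, ← Finset.sum_sub_distrib]
      exact Finset.sum_congr rfl fun F _ => by simp only [p, hgs c F]; ring
    rw [this, hgl, hl]; field_simp; ring
  have q : ∀ a b, ∑ c, gi a c * p c b = (if a = b then (1 : ℝ) else 0) - I a * l b / ι := by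
    intro a b
    rw [← hginv, ← hg1]
    simp only [Finset.sum_mul, Finset.sum_div, ← Finset.sum_sub_distrib]
    exact Finset.sum_congr rfl fun F _ => by simp only [p]; ring
  have tr : ∑ x, ∑ y, gi x y * p x y = (N : ℝ) - 1 := by
    have : ∀ x, ∑ y, gi x y * p x y = 1 - I x * l x / ι := fun x => by
      simp only [ps x, q]; simp
    simp only [this, Finset.sum_sub_distrib, ← Finset.sum_div, hl]
    simp [hι0]
  have ric : ∀ a c, ∑ x, ∑ y, gi x y * (p a c * p x y - p a y * p x c)
      = ((N : ℝ) - 2) * p a c := by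
    intro a c
    have : ∑ x, ∑ y, gi x y * (p a c * p x y - p a y * p x c)
        = p a c * (∑ x, ∑ y, gi x y * p x y) - ∑ x, p x c * ∑ y, gi x y * p y a := by
      simp only [Finset.mul_sum, ← Finset.sum_sub_distrib]
      exact Finset.sum_congr rfl fun x _ => Finset.sum_congr rfl fun y _ => by
        rw [ps y a]; ring
    have e : ∑ x, p x c * ∑ y, gi x y * p y a = p a c - (∑ x, I x * p x c) * (l a / ι) := by
      simp only [q, mul_sub, Finset.sum_sub_distrib, Finset.sum_mul]
      congr 1
      · simp
      · exact Finset.sum_congr rfl fun F _ => by ring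
    rw [this, tr, e, pI]; ring
  refine ⟨fun a b c d => p a c * p b d - p a d * p b c,
    ⟨fun a b c d => by ring, fun a b c d => by ring, fun a b c d => ?_, fun b c d => ?_⟩, ?_⟩
  · simp only [ps c a, ps c b, ps b a]; ring
  · simp only [mul_sub, Finset.sum_sub_distrib, ← mul_assoc, ← Finset.sum_mul, pI]; ring
  · change ∑ a, ∑ c, gi a c * ∑ x, ∑ y, gi x y * (p a c * p x y - p a y * p x c) = _
    simp only [ric, mul_left_comm _ ((N : ℝ) - 2), ← Finset.mul_sum, tr]
    ring
end

/-- for `ι = g(I,I) ≠ 0`, the space of algebraic Weyl tensors `W`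
on the `(n+2)`-dimensional space satisfying `I^A W_{AB[CD} I_{E]} = 0` has
dimension `n(n+1)²(n+2)/12 - 1`. -/
theorem dim_compatible_weyl {n : ℕ} (hn : 1 ≤ n)
    (g gi : Fin (n + 2) → Fin (n + 2) → ℝ)
    (hgsymm : ∀ a b, g a b = g b a)
    (hginv : ∀ a b, (∑ c, gi a c * g c b) = if a = b then (1 : ℝ) else 0)
    (I : Fin (n + 2) → ℝ) (ι : ℝ)
    (hι : ι = ∑ a, ∑ b, g a b * I a * I b) (hι0 : ι ≠ 0) :
    Module.finrank ℝ (LinearMap.ker (weylCondMap g gi I))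
      = n * (n + 1) ^ 2 * (n + 2) / 12 - 1 := by
  have hgM : (Matrix.of gi) * (Matrix.of g) = 1 := by
    ext a b
    simp [Matrix.mul_apply, hginv, Matrix.one_apply]
  have hgi : ∀ a b, gi a b = gi b a := by
    have hgt : (Matrix.of g).transpose = Matrix.of g := by ext a b; simp [hgsymm a b]
    have h1 : (Matrix.of g) * (Matrix.of gi).transpose = 1 := by
      have := congrArg Matrix.transpose hgM
      rwa [Matrix.transpose_mul, hgt, Matrix.transpose_one] at this
    have h2 : Matrix.of gi = (Matrix.of gi).transpose := left_inv_eq_right_inv hgM h1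
    intro a b
    exact congrFun (congrFun h2 a) b
  obtain ⟨l, hgl⟩ : ∃ l : Fin (n + 2) → ℝ, ∀ a, ∑ b, g a b * I b = l a := ⟨_, fun _ => rfl⟩
  have hl : ∑ F, I F * l F = ι := by
    rw [hι]
    simp only [← hgl, Finset.mul_sum]
    exact Finset.sum_congr rfl fun x _ => Finset.sum_congr rfl fun y _ => by ring
  have hg1 : ∀ x, ∑ y, gi x y * l y = I x := by
    intro x
    simp only [← hgl, Finset.mul_sum]
    rw [Finset.sum_comm]
    simp only [← mul_assoc, ← Finset.sum_mul, hginv]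
    simp
  have hK := finrank_KK I l ι hι0 hl
  let sc : KK I →ₗ[ℝ] ℝ := scal gi ∘ₗ (KK I).subtype
  have hsc : Function.Surjective sc := by
    obtain ⟨R, hR, hs⟩ := scal_witness g hgsymm hginv hgl hι0 hl hg1
    apply LinearMap.surjective_of_ne_zero
    intro h0
    have h1 : sc ⟨R, hR⟩ = 0 := by rw [h0]; rfl
    have h2 : sc ⟨R, hR⟩ = scal gi R := rfl
    rw [h2, hs] at h1
    push_cast at h1
    have : (1 : ℝ) ≤ n := by exact_mod_cast hn
    nlinarith
  have hrn := LinearMap.finrank_range_add_finrank_ker sc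
  rw [LinearMap.range_eq_top.2 hsc, finrank_top, Module.finrank_self] at hrn
  let φ : LinearMap.ker sc →ₗ[ℝ] T4 (n + 2) :=
    Phi gi l ι ∘ₗ (KK I).subtype ∘ₗ (LinearMap.ker sc).subtype
  have hφi : Function.Injective φ := by
    rintro ⟨⟨R, hR⟩, hs⟩ ⟨⟨S, hS⟩, hs'⟩ h0
    have h0' : Phi gi l ι R = Phi gi l ι S := h0
    have h1 : R - S = 0 :=
      Phi_inj (gi := gi) hι0 hl ((KK I).sub_mem hR hS) (by rw [map_sub, h0', sub_self])
    have h2 : R = S := sub_eq_zero.1 h1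
    subst h2
    rfl
  have hφr : LinearMap.range φ = LinearMap.ker (weylCondMap g gi I) := by
    ext W
    constructor
    · rintro ⟨⟨⟨R, hR⟩, hs⟩, rfl⟩
      exact Phi_mem g hgl hι0 hgi hl hg1 hR hs
    · intro hW
      obtain ⟨R, hR, hs, rfl⟩ := Phi_surj g hgl hι0 hgi hl hg1 hW
      exact ⟨⟨⟨R, hR⟩, hs⟩, rfl⟩
  rw [← hφr, LinearMap.finrank_range_of_inj hφi]
  have hN : 12 * Module.finrank ℝ (KK I) = n * (n + 1) ^ 2 * (n + 2) := by
    have : (12 : ℝ) * Module.finrank ℝ (KK I) = n * (n + 1) ^ 2 * (n + 2) := by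
      rw [hK]; push_cast; ring
    exact_mod_cast this
  omega
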